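/- arXiv:0711.0237 — 3 statements merged into one kernel-verified Lean document; each statement's English description precedes it below -/
import Mathlib

section
/- For all p, q ∈ [0,1], the binary entropy function satisfies |h_b(p) − h_b(q)| ≤ h_b(|p−q|). -/
/-- The binary entropy function `h_b(x) = −x·log₂ x − (1−x)·log₂(1−x)`,
with the convention `0 · log₂ 0 = 0` (in Lean, `Real.logb 2 0 = 0`). -/
noncomputable def binEnt (x : ℝ) : ℝ :=
  -(x * Real.logb 2 x) - (1 - x) * Real.logb 2 (1 - x)

/-!
A concave function on `[0, 1]` vanishing at `0` lies above its chords from the origin, hence is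
subadditive. For `q ≤ p`, subadditivity applied to `p = q + (p - q)` bounds `h_b(p) - h_b(q)` by
`h_b(p - q)`; applied to `1 - q = (1 - p) + (p - q)` and combined with the symmetry
`h_b(1 - x) = h_b(x)`, it bounds `h_b(q) - h_b(p)` in the same way.
-/

theorem smul_map_le_map_smul_of_concaveOn {𝕜 E β : Type*} [Ring 𝕜] [PartialOrder 𝕜]
    [AddRightMono 𝕜] [AddCommMonoid E] [Module 𝕜 E]
    [AddCommMonoid β] [PartialOrder β] [IsOrderedAddMonoid β] [Module 𝕜 β] [PosSMulMono 𝕜 β]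
    {s : Set E} {f : E → β} (hf : ConcaveOn 𝕜 s f) (h0 : 0 ∈ s) (hf0 : 0 ≤ f 0)
    {x : E} (hx : x ∈ s) {t : 𝕜} (ht0 : 0 ≤ t) (ht1 : t ≤ 1) :
    t • f x ≤ f (t • x) :=
  calc t • f x ≤ t • f x + (1 - t) • f 0 :=
        le_add_of_nonneg_right (smul_nonneg (sub_nonneg.2 ht1) hf0)
    _ ≤ f (t • x + (1 - t) • 0) := hf.2 hx h0 ht0 (sub_nonneg.2 ht1) (add_sub_cancel t 1)
    _ = f (t • x) := by rw [smul_zero, add_zero]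

theorem map_add_le_of_concaveOn {𝕜 β : Type*} [Field 𝕜] [LinearOrder 𝕜] [IsStrictOrderedRing 𝕜]
    [AddCommMonoid β] [PartialOrder β] [IsOrderedAddMonoid β] [Module 𝕜 β] [PosSMulMono 𝕜 β]
    {s : Set 𝕜} {f : 𝕜 → β} (hf : ConcaveOn 𝕜 s f) (h0 : 0 ∈ s) (hf0 : 0 ≤ f 0)
    {x y : 𝕜} (hx : 0 ≤ x) (hy : 0 ≤ y) (hxy : x + y ∈ s) :
    f (x + y) ≤ f x + f y := by
  rcases (add_nonneg hx hy).eq_or_lt' with hsum | hsum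
  · obtain ⟨rfl, rfl⟩ := (add_eq_zero_iff_of_nonneg hx hy).1 hsum
    simpa only [add_zero] using le_add_of_nonneg_right hf0
  have chord {z : 𝕜} (hz : 0 ≤ z) (hzs : z ≤ x + y) : (z / (x + y)) • f (x + y) ≤ f z := by
    simpa only [smul_eq_mul, div_mul_cancel₀ z hsum.ne'] using
      smul_map_le_map_smul_of_concaveOn hf h0 hf0 hxy (div_nonneg hz hsum.le)
        (div_le_one_of_le₀ hzs hsum.le)
  calc f (x + y) = (x / (x + y)) • f (x + y) + (y / (x + y)) • f (x + y) := by
        rw [← add_smul, ← add_div, div_self hsum.ne', one_smul]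
    _ ≤ f x + f y :=
        add_le_add (chord hx (le_add_of_nonneg_right hy)) (chord hy (le_add_of_nonneg_left hx))

theorem abs_map_sub_map_le_of_subadditive_of_symm {α β : Type*}
    [AddCommGroup α] [LinearOrder α] [IsOrderedAddMonoid α]
    [AddCommGroup β] [Lattice β] [IsOrderedAddMonoid β] {c : α} {f : α → β}
    (hadd : ∀ ⦃x y⦄, 0 ≤ x → 0 ≤ y → x + y ≤ c → f (x + y) ≤ f x + f y)
    (hsymm : ∀ x ∈ Set.Icc 0 c, f (c - x) = f x)
    {x y : α} (hx : x ∈ Set.Icc 0 c) (hy : y ∈ Set.Icc 0 c) :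
    |f x - f y| ≤ f |x - y| := by
  wlog hyx : y ≤ x generalizing x y
  · simpa only [abs_sub_comm] using this hy hx (le_of_not_ge hyx)
  have hd : 0 ≤ x - y := sub_nonneg.2 hyx
  have upper : f x ≤ f y + f (x - y) := by
    simpa only [add_sub_cancel] using
      hadd hy.1 hd ((add_sub_cancel y x).trans_le hx.2)
  have lower : f y ≤ f x + f (x - y) := by
    have hsplit : c - x + (x - y) = c - y := sub_add_sub_cancel c x y
    simpa only [hsplit, hsymm x hx, hsymm y hy] using
      hadd (sub_nonneg.2 hx.2) hd (hsplit.trans_le (sub_le_self c hy.1))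
  rw [abs_of_nonneg hd, abs_le', neg_sub]
  exact ⟨sub_le_iff_le_add'.2 upper, sub_le_iff_le_add'.2 lower⟩

theorem binEnt_zero : binEnt 0 = 0 := by
  simp [binEnt]

theorem binEnt_one_sub (x : ℝ) : binEnt (1 - x) = binEnt x := by
  unfold binEnt
  ring_nf

theorem binEnt_eq_inv_log_two_smul_binEntropy :
    binEnt = fun x ↦ (Real.log 2)⁻¹ • Real.binEntropy x := by
  ext x
  simp only [binEnt, Real.binEntropy, Real.logb, Real.log_inv, smul_eq_mul]
  ring

theorem concaveOn_binEnt : ConcaveOn ℝ (Set.Icc 0 1) binEnt := by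
  rw [binEnt_eq_inv_log_two_smul_binEntropy]
  exact Real.strictConcave_binEntropy.concaveOn.smul (inv_nonneg.2 (Real.log_nonneg one_le_two))

/-- For all `p, q ∈ [0,1]`, `|h_b(p) − h_b(q)| ≤ h_b(|p−q|)`. -/
theorem abs_binEnt_sub_le (p q : ℝ)
    (hp : p ∈ Set.Icc (0 : ℝ) 1) (hq : q ∈ Set.Icc (0 : ℝ) 1) :
    |binEnt p - binEnt q| ≤ binEnt |p - q| := by
  have subadditive ⦃x y : ℝ⦄ (hx : 0 ≤ x) (hy : 0 ≤ y) (hxy : x + y ≤ 1) :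
      binEnt (x + y) ≤ binEnt x + binEnt y :=
    map_add_le_of_concaveOn concaveOn_binEnt (Set.left_mem_Icc.2 zero_le_one) binEnt_zero.ge
      hx hy ⟨add_nonneg hx hy, hxy⟩
  exact abs_map_sub_map_le_of_subadditive_of_symm subadditive (fun x _ ↦ binEnt_one_sub x) hp hq
end

section
/- Let P and Q be two probability distributions on a finite set S with |S| ≥ 2, and let 0 ≤ ε ≤ 1/2. If |P(s) − Q(s)| ≤ ε for every s ∈ S, then |H(P) − H(Q)| ≤ (|S|−1)·h_b(ε) + (|S|−1)·log₂(|S|−1)·ε. -/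
open Finset

/-- The Shannon entropy `H(P) = −∑_{s∈S} P(s)·log₂ P(s)` of a distribution on a
finite set, with the convention `0 · log₂ 0 = 0`. -/
noncomputable def shannonEntropy {S : Type*} [Fintype S] (P : S → ℝ) : ℝ :=
  -∑ s, P s * Real.logb 2 (P s)

/-!
Write `η x = -x log x` and `d = |p - q|` for `p, q ∈ [0, 1]`. Concavity of `η` on `[0, ∞)` says that
`η` grows over an interval of length `d` by at most `η d - η 0 = η d`, and falls over such an
interval inside `[0, 1]` by at most `η (1 - d) - η 1 = η (1 - d)`. Both are at most
`h d = η d + η (1 - d)`, which is at most `h ε` when `d ≤ ε ≤ 1/2`, so each of the `n` coordinates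
contributes at most `h ε`. As the total masses agree, `P s ≤ Q s` at some `s`, and the contribution
of that coordinate improves to `η (1 - d) ≤ d ≤ ε`. For `n ≥ 3` this is absorbed by the term
`(n - 1) log (n - 1) ε`. For `n = 2` that term vanishes, but then the other coordinate moves up by
the same `d`, and the two contributions add up to at most `η d + η (1 - d) = h d`.
-/

section

open Real

theorem concaveOn_map_add_map_le {𝕜 β : Type*} [Field 𝕜] [LinearOrder 𝕜] [IsStrictOrderedRing 𝕜]
    [AddCommMonoid β] [PartialOrder β] [IsOrderedAddMonoid β] [Module 𝕜 β]
    {s : Set 𝕜} {f : 𝕜 → β} (hf : ConcaveOn 𝕜 s f) {x y z w : 𝕜} (hx : x ∈ s) (hw : w ∈ s)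
    (hxy : x ≤ y) (hyw : y ≤ w) (h : x + w = y + z) : f x + f w ≤ f y + f z := by
  obtain ⟨a, b, ha, hb, hab, hy⟩ : y ∈ segment 𝕜 x w := by
    rw [segment_eq_Icc (hxy.trans hyw)]
    exact ⟨hxy, hyw⟩
  have hz : b • x + a • w = z := by
    simp only [smul_eq_mul] at hy ⊢
    linear_combination (x + w) * hab - hy + h
  calc f x + f w = (a • f x + b • f w) + (b • f x + a • f w) := by
        rw [add_add_add_comm, ← add_smul, ← add_smul, add_comm b a, hab, one_smul, one_smul]
    _ ≤ f y + f z := by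
        rw [← hy, ← hz]
        exact add_le_add (hf.2 hx hw ha hb hab) (hf.2 hx hw hb ha (by rwa [add_comm]))

theorem negMulLog_sub_negMulLog_le_negMulLog_sub {p q : ℝ} (hq : 0 ≤ q) (hqp : q ≤ p) :
    negMulLog p - negMulLog q ≤ negMulLog (p - q) := by
  have h := concaveOn_map_add_map_le concaveOn_negMulLog (x := 0) (y := q) (z := p - q) (w := p)
    Set.self_mem_Ici (hq.trans hqp) hq hqp (by ring)
  rw [negMulLog_zero] at h
  linarith

theorem negMulLog_sub_negMulLog_le_negMulLog_one_sub {p q : ℝ}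
    (hp : 0 ≤ p) (hpq : p ≤ q) (hq : q ≤ 1) :
    negMulLog p - negMulLog q ≤ negMulLog (1 - (q - p)) := by
  have h := concaveOn_map_add_map_le concaveOn_negMulLog (x := p) (y := q) (z := 1 - (q - p))
    (w := 1) hp (Set.mem_Ici.2 zero_le_one) hpq hq (by ring)
  rw [negMulLog_one] at h
  linarith

theorem negMulLog_sub_negMulLog_le_sub {p q : ℝ} (hp : 0 ≤ p) (hpq : p ≤ q) (hq : q ≤ 1) :
    negMulLog p - negMulLog q ≤ q - p :=
  calc negMulLog p - negMulLog q ≤ negMulLog (1 - (q - p)) :=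
        negMulLog_sub_negMulLog_le_negMulLog_one_sub hp hpq hq
    _ ≤ 1 - (1 - (q - p)) := negMulLog_le_one_sub_self (by linarith)
    _ = q - p := by ring

theorem abs_negMulLog_sub_negMulLog_le_binEntropy {p q : ℝ}
    (hp : p ∈ Set.Icc 0 1) (hq : q ∈ Set.Icc 0 1) :
    |negMulLog p - negMulLog q| ≤ binEntropy |p - q| := by
  wlog hqp : q ≤ p generalizing p q
  · rw [abs_sub_comm, abs_sub_comm p]
    exact this hq hp (le_of_not_ge hqp)
  have hd₀ : 0 ≤ p - q := sub_nonneg.2 hqp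
  have hd₁ : p - q ≤ 1 := by linarith [hp.2, hq.1]
  have h_rise := negMulLog_sub_negMulLog_le_negMulLog_sub hq.1 hqp
  have h_fall := negMulLog_sub_negMulLog_le_negMulLog_one_sub hq.1 hqp hp.2
  have h_nonneg := negMulLog_nonneg hd₀ hd₁
  have h_nonneg' := negMulLog_nonneg (sub_nonneg.2 hd₁) (sub_le_self 1 hd₀)
  rw [abs_of_nonneg hd₀, binEntropy_eq_negMulLog_add_negMulLog_one_sub, abs_sub_le_iff]
  constructor <;> linarith

theorem negMulLog_add_sub_negMulLog_add_le_binEntropy {p p' q q' : ℝ}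
    (hp : 0 ≤ p) (hp' : 0 ≤ p') (hq : q ∈ Set.Icc 0 1) (hq' : q' ∈ Set.Icc 0 1)
    (h : p + p' = q + q') :
    negMulLog p + negMulLog p' - (negMulLog q + negMulLog q') ≤ binEntropy |p - q| := by
  wlog hpq : p ≤ q generalizing p p' q q'
  · have hd : p - q = q' - p' := by linarith
    rw [add_comm (negMulLog p), add_comm (negMulLog q), hd, abs_sub_comm]
    exact this hp' hp hq' hq (by linarith) (by linarith)
  have hd : p' - q' = q - p := by linarith
  have h_fall := negMulLog_sub_negMulLog_le_negMulLog_one_sub hp hpq hq.2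
  have h_rise := negMulLog_sub_negMulLog_le_negMulLog_sub hq'.1 (show q' ≤ p' by linarith)
  rw [hd] at h_rise
  rw [abs_sub_comm, abs_of_nonneg (sub_nonneg.2 hpq),
    binEntropy_eq_negMulLog_add_negMulLog_one_sub]
  linarith

theorem binEntropy_le_binEntropy {d ε : ℝ} (hd : 0 ≤ d) (hdε : d ≤ ε) (hε : ε ≤ 1 / 2) :
    binEntropy d ≤ binEntropy ε := by
  rw [one_div] at hε
  exact binEntropy_strictMonoOn.monotoneOn ⟨hd, hdε.trans hε⟩ ⟨hd.trans hdε, hε⟩ hdε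

theorem one_le_mul_log {x : ℝ} (hx : 2 ≤ x) : 1 ≤ x * log x :=
  calc (1 : ℝ) ≤ 2 * log 2 := by linarith [log_two_gt_d9]
    _ ≤ x * log x := by gcongr

section SumNegMulLog

variable {ι : Type*} {s : Finset ι} {P Q : ι → ℝ} {ε : ℝ}

theorem sum_negMulLog_sub_le_card_sub_one_mul_binEntropy_add (hs : s.Nonempty)
    (hP : ∀ i ∈ s, P i ∈ Set.Icc 0 1) (hQ : ∀ i ∈ s, Q i ∈ Set.Icc 0 1)
    (hPQ : ∑ i ∈ s, P i ≤ ∑ i ∈ s, Q i) (hε : ε ≤ 1 / 2) (hclose : ∀ i ∈ s, |P i - Q i| ≤ ε) :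
    ∑ i ∈ s, negMulLog (P i) - ∑ i ∈ s, negMulLog (Q i) ≤ (#s - 1) * binEntropy ε + ε := by
  classical
  obtain ⟨i₀, hi₀, hle⟩ : ∃ i ∈ s, P i ≤ Q i := exists_le_of_sum_le hs hPQ
  have h_fall : negMulLog (P i₀) - negMulLog (Q i₀) ≤ ε := by
    have hd := (abs_sub_le_iff.1 (hclose i₀ hi₀)).2
    exact (negMulLog_sub_negMulLog_le_sub (hP i₀ hi₀).1 hle (hQ i₀ hi₀).2).trans hd
  have h_each : ∀ i ∈ s.erase i₀, negMulLog (P i) - negMulLog (Q i) ≤ binEntropy ε := by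
    intro i hi
    have hi := mem_of_mem_erase hi
    calc negMulLog (P i) - negMulLog (Q i) ≤ |negMulLog (P i) - negMulLog (Q i)| := le_abs_self _
      _ ≤ binEntropy |P i - Q i| :=
          abs_negMulLog_sub_negMulLog_le_binEntropy (hP i hi) (hQ i hi)
      _ ≤ binEntropy ε := binEntropy_le_binEntropy (abs_nonneg _) (hclose i hi) hε
  have h_rest := sum_le_card_nsmul _ _ _ h_each
  rw [nsmul_eq_mul, cast_card_erase_of_mem hi₀] at h_rest
  rw [← sum_sub_distrib, ← sum_erase_add _ _ hi₀]
  exact add_le_add h_rest h_fall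

theorem sum_negMulLog_sub_le_binEntropy_of_card_eq_two (hs : #s = 2)
    (hP : ∀ i ∈ s, 0 ≤ P i) (hQ : ∀ i ∈ s, Q i ∈ Set.Icc 0 1)
    (hPQ : ∑ i ∈ s, P i = ∑ i ∈ s, Q i) (hε : ε ≤ 1 / 2) (hclose : ∀ i ∈ s, |P i - Q i| ≤ ε) :
    ∑ i ∈ s, negMulLog (P i) - ∑ i ∈ s, negMulLog (Q i) ≤ binEntropy ε := by
  classical
  obtain ⟨a, b, hab, rfl⟩ := card_eq_two.1 hs
  have ha : a ∈ ({a, b} : Finset ι) := mem_insert_self a {b}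
  have hb : b ∈ ({a, b} : Finset ι) := mem_insert_of_mem (mem_singleton_self b)
  simp only [sum_pair hab] at hPQ ⊢
  calc negMulLog (P a) + negMulLog (P b) - (negMulLog (Q a) + negMulLog (Q b))
      ≤ binEntropy |P a - Q a| :=
        negMulLog_add_sub_negMulLog_add_le_binEntropy (hP a ha) (hP b hb) (hQ a ha) (hQ b hb) hPQ
    _ ≤ binEntropy ε := binEntropy_le_binEntropy (abs_nonneg _) (hclose a ha) hε

theorem sum_negMulLog_sub_le (hs : 2 ≤ #s)
    (hP : ∀ i ∈ s, P i ∈ Set.Icc 0 1) (hQ : ∀ i ∈ s, Q i ∈ Set.Icc 0 1)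
    (hPQ : ∑ i ∈ s, P i = ∑ i ∈ s, Q i) (hε : ε ≤ 1 / 2) (hclose : ∀ i ∈ s, |P i - Q i| ≤ ε) :
    ∑ i ∈ s, negMulLog (P i) - ∑ i ∈ s, negMulLog (Q i) ≤
      (#s - 1) * binEntropy ε + (#s - 1) * log (#s - 1) * ε := by
  rcases hs.eq_or_lt' with h_two | h_three
  · have h := sum_negMulLog_sub_le_binEntropy_of_card_eq_two h_two (fun i hi => (hP i hi).1) hQ
      hPQ hε hclose
    have h_card : (#s : ℝ) - 1 = 1 := by
      rw [h_two]
      norm_num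
    rwa [h_card, log_one, mul_zero, zero_mul, add_zero, one_mul]
  · have hs₀ : s.Nonempty := card_pos.1 (by lia)
    have hε₀ : 0 ≤ ε := by
      obtain ⟨i, hi⟩ := hs₀
      exact (abs_nonneg _).trans (hclose i hi)
    have h_card : (2 : ℝ) ≤ #s - 1 := by
      rw [le_sub_iff_add_le]
      exact_mod_cast h_three
    calc ∑ i ∈ s, negMulLog (P i) - ∑ i ∈ s, negMulLog (Q i)
        ≤ (#s - 1) * binEntropy ε + ε :=
          sum_negMulLog_sub_le_card_sub_one_mul_binEntropy_add hs₀ hP hQ hPQ.le hε hclose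
      _ ≤ (#s - 1) * binEntropy ε + (#s - 1) * log (#s - 1) * ε := by
          gcongr
          exact le_mul_of_one_le_left hε₀ (one_le_mul_log h_card)

theorem abs_sum_negMulLog_sub_le (hs : 2 ≤ #s)
    (hP : ∀ i ∈ s, P i ∈ Set.Icc 0 1) (hQ : ∀ i ∈ s, Q i ∈ Set.Icc 0 1)
    (hPQ : ∑ i ∈ s, P i = ∑ i ∈ s, Q i) (hε : ε ≤ 1 / 2) (hclose : ∀ i ∈ s, |P i - Q i| ≤ ε) :
    |∑ i ∈ s, negMulLog (P i) - ∑ i ∈ s, negMulLog (Q i)| ≤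
      (#s - 1) * binEntropy ε + (#s - 1) * log (#s - 1) * ε :=
  abs_sub_le_iff.2 ⟨sum_negMulLog_sub_le hs hP hQ hPQ hε hclose,
    sum_negMulLog_sub_le hs hQ hP hPQ.symm hε fun i hi => abs_sub_comm (P i) (Q i) ▸ hclose i hi⟩

end SumNegMulLog

theorem binEnt_eq_binEntropy_div_log_two (x : ℝ) : binEnt x = binEntropy x / log 2 := by
  simp only [binEntropy_eq_negMulLog_add_negMulLog_one_sub, binEnt, negMulLog, logb]
  ring

theorem shannonEntropy_eq_sum_negMulLog_div_log_two {S : Type*} [Fintype S] (P : S → ℝ) :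
    shannonEntropy P = (∑ s, negMulLog (P s)) / log 2 := by
  simp only [shannonEntropy, negMulLog, logb, sum_div, ← sum_neg_distrib, neg_mul, neg_div,
    mul_div_assoc]

end

theorem entropy_diff_le_of_close_general {S : Type*} [Fintype S] (hS : 2 ≤ Fintype.card S)
    (P Q : S → ℝ) (hP : ∀ s, P s ∈ Set.Icc 0 1) (hQ : ∀ s, Q s ∈ Set.Icc 0 1)
    (hPQ : ∑ s, P s = ∑ s, Q s) (ε : ℝ) (hε : ε ≤ 1 / 2) (hclose : ∀ s, |P s - Q s| ≤ ε) :
    |shannonEntropy P - shannonEntropy Q| ≤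
      ((Fintype.card S : ℝ) - 1) * binEnt ε +
        ((Fintype.card S : ℝ) - 1) * Real.logb 2 ((Fintype.card S : ℝ) - 1) * ε := by
  have hlog : 0 < Real.log 2 := Real.log_pos one_lt_two
  calc |shannonEntropy P - shannonEntropy Q|
      = |∑ s, Real.negMulLog (P s) - ∑ s, Real.negMulLog (Q s)| / Real.log 2 := by
        simp only [shannonEntropy_eq_sum_negMulLog_div_log_two, ← sub_div, abs_div,
          abs_of_pos hlog]
    _ ≤ (((Fintype.card S : ℝ) - 1) * Real.binEntropy ε +
          ((Fintype.card S : ℝ) - 1) * Real.log ((Fintype.card S : ℝ) - 1) * ε) / Real.log 2 := by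
        gcongr
        exact abs_sum_negMulLog_sub_le hS (fun s _ => hP s) (fun s _ => hQ s) hPQ hε
          fun s _ => hclose s
    _ = ((Fintype.card S : ℝ) - 1) * binEnt ε +
          ((Fintype.card S : ℝ) - 1) * Real.logb 2 ((Fintype.card S : ℝ) - 1) * ε := by
        rw [binEnt_eq_binEntropy_div_log_two, Real.logb]
        ring

/-- If two probability distributions `P, Q` on a finite set `S` with
`|S| ≥ 2` satisfy `|P(s) − Q(s)| ≤ ε` for all `s`, where `0 ≤ ε ≤ 1/2`, then
`|H(P) − H(Q)| ≤ (|S|−1)·h_b(ε) + (|S|−1)·log₂(|S|−1)·ε`. -/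
theorem entropy_diff_le_of_close {S : Type*} [Fintype S]
    (hS : 2 ≤ Fintype.card S)
    (P Q : S → ℝ)
    (hP0 : ∀ s, 0 ≤ P s) (hP1 : ∑ s, P s = 1)
    (hQ0 : ∀ s, 0 ≤ Q s) (hQ1 : ∑ s, Q s = 1)
    (ε : ℝ) (hε0 : 0 ≤ ε) (hε1 : ε ≤ 1 / 2)
    (hclose : ∀ s, |P s - Q s| ≤ ε) :
    |shannonEntropy P - shannonEntropy Q| ≤
      ((Fintype.card S : ℝ) - 1) * binEnt ε +
        ((Fintype.card S : ℝ) - 1) * Real.logb 2 ((Fintype.card S : ℝ) - 1) * ε :=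
  entropy_diff_le_of_close_general hS P Q (mem_Icc_of_mem_stdSimplex ⟨hP0, hP1⟩)
    (mem_Icc_of_mem_stdSimplex ⟨hQ0, hQ1⟩) (hP1.trans hQ1.symm) ε hε1 hclose
end

section
/- Let X be a finite set and let P be a rational-valued probability distribution on X with p₀ = min_{x∈X} P(x) > 0. Then there exist a finite constant η = η(P) and a threshold n₁ such that for every n ≥ n₁ for which n·P(x) is an integer for every x ∈ X, and for every positive integer M, one has |T_n(P)|^M ≥ exp(−η·M·log n) · |T_{Mn}(P)|, where |T_k(P)| = k! / ∏_{x∈X} (k·P(x))! is the number of sequences in X^k whose empirical distribution equals P. -/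
open Finset

/-- The number of length-`k` sequences over `X` of type `P`, i.e. the multinomial
coefficient `k! / ∏_x (k·P(x))!`.  Here the count of symbol `x` is recovered as the
natural number `((k : ℚ) * P x).num.toNat`, which equals `k·P(x)` whenever
`k·P(x)` is a (nonnegative) integer. -/
def typeClassCard {X : Type*} [Fintype X] (P : X → ℚ) (k : ℕ) : ℕ :=
  Nat.factorial k / ∏ x, Nat.factorial (((k : ℚ) * P x).num.toNat)

/-!
Everything reduces to an inequality for multinomial coefficients of a vector of counts `a` with
`n = ∑ a`. Weight each count vector `k` of total `n` by `multinomial k * ∏ x, a x ^ k x`; by the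
multinomial theorem these weights add up to `n ^ n`, there are at most `(n + 1) ^ |X|` of them, and
`k = a` is the largest. Hence `n ^ n ≤ (n + 1) ^ |X| * multinomial a * ∏ x, a x ^ a x`. A single
term of the expansion of `n ^ (M * n)` bounds `multinomial (M • a) * (∏ x, a x ^ a x) ^ M` from
above, and comparing it with the `M`-th power of the previous estimate cancels the product.
-/

section Multinomial

variable {X : Type*}

lemma factorial_mul_pow_le_factorial_mul_pow (a b : ℕ) :
    a.factorial * a ^ b ≤ b.factorial * a ^ a := by
  rcases le_total a b with hab | hba
  · calc a.factorial * a ^ b = a.factorial * a ^ (b - a) * a ^ a := by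
          rw [mul_assoc, ← pow_add, Nat.sub_add_cancel hab]
      _ ≤ b.factorial * a ^ a := by
          gcongr
          exact Nat.factorial_mul_pow_sub_le_factorial hab
  · calc a.factorial * a ^ b = b.factorial * a.descFactorial (a - b) * a ^ b := by
          rw [← Nat.factorial_mul_descFactorial (Nat.sub_le a b), Nat.sub_sub_self hba]
      _ ≤ b.factorial * a ^ (a - b) * a ^ b := by
          gcongr
          exact Nat.descFactorial_le_pow a (a - b)
      _ = b.factorial * a ^ a := by
          rw [mul_assoc, ← pow_add, Nat.sub_add_cancel hba]

lemma multinomial_mul_prod_pow_le_multinomial_mul_prod_pow_self (s : Finset X) {a b : X → ℕ}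
    (hab : ∑ x ∈ s, b x = ∑ x ∈ s, a x) :
    Nat.multinomial s b * ∏ x ∈ s, a x ^ b x ≤ Nat.multinomial s a * ∏ x ∈ s, a x ^ a x := by
  have hspec : (∏ x ∈ s, (b x).factorial) * Nat.multinomial s b =
      (∏ x ∈ s, (a x).factorial) * Nat.multinomial s a := by
    rw [Nat.multinomial_spec, Nat.multinomial_spec, hab]
  have hprod : (∏ x ∈ s, (a x).factorial) * ∏ x ∈ s, a x ^ b x ≤
      (∏ x ∈ s, (b x).factorial) * ∏ x ∈ s, a x ^ a x := by
    simp only [← prod_mul_distrib]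
    exact prod_le_prod' fun x _ => factorial_mul_pow_le_factorial_mul_pow (a x) (b x)
  refine Nat.le_of_mul_le_mul_left ?_ (Nat.prod_factorial_pos s a)
  calc (∏ x ∈ s, (a x).factorial) * (Nat.multinomial s b * ∏ x ∈ s, a x ^ b x)
      = Nat.multinomial s b * ((∏ x ∈ s, (a x).factorial) * ∏ x ∈ s, a x ^ b x) := by ring
    _ ≤ Nat.multinomial s b * ((∏ x ∈ s, (b x).factorial) * ∏ x ∈ s, a x ^ a x) := by gcongr
    _ = (∏ x ∈ s, (b x).factorial) * Nat.multinomial s b * ∏ x ∈ s, a x ^ a x := by ring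
    _ = (∏ x ∈ s, (a x).factorial) * (Nat.multinomial s a * ∏ x ∈ s, a x ^ a x) := by
        rw [hspec, mul_assoc]

lemma card_piAntidiag_le_pow [DecidableEq X] (s : Finset X) (n : ℕ) :
    #(piAntidiag s n) ≤ (n + 1) ^ #s := by
  calc #(piAntidiag s n) ≤ #(s.pi fun _ => range (n + 1)) := by
        refine card_le_card_of_injOn (fun k x _ => k x) (fun k hk => ?_) fun k hk l hl hkl => ?_
        · have hsum := (mem_piAntidiag.1 hk).1
          refine mem_pi.2 fun x hx => mem_range_succ_iff.2 ?_
          exact hsum ▸ single_le_sum_of_canonicallyOrdered hx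
        · funext x
          by_cases hx : x ∈ s
          · exact congr_fun₂ hkl x hx
          · rw [not_imp_comm.1 ((mem_piAntidiag.1 hk).2 x) hx,
              not_imp_comm.1 ((mem_piAntidiag.1 hl).2 x) hx]
    _ = (n + 1) ^ #s := by simp only [card_pi, card_range, prod_const]

lemma sum_pow_sum_le_multinomial_mul_prod_pow (s : Finset X) (a : X → ℕ) :
    (∑ x ∈ s, a x) ^ (∑ x ∈ s, a x) ≤
      (∑ x ∈ s, a x + 1) ^ #s * (Nat.multinomial s a * ∏ x ∈ s, a x ^ a x) := by
  classical
  calc (∑ x ∈ s, a x) ^ (∑ x ∈ s, a x)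
      = ∑ k ∈ piAntidiag s (∑ x ∈ s, a x), Nat.multinomial s k * ∏ x ∈ s, a x ^ k x :=
        sum_pow_eq_sum_piAntidiag s a _
    _ ≤ #(piAntidiag s (∑ x ∈ s, a x)) * (Nat.multinomial s a * ∏ x ∈ s, a x ^ a x) :=
        sum_le_card_nsmul _ _ _ fun k hk =>
          multinomial_mul_prod_pow_le_multinomial_mul_prod_pow_self s (mem_piAntidiag.1 hk).1
    _ ≤ (∑ x ∈ s, a x + 1) ^ #s * (Nat.multinomial s a * ∏ x ∈ s, a x ^ a x) := by
        gcongr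
        exact card_piAntidiag_le_pow s _

lemma multinomial_mul_prod_pow_le_sum_pow {R : Type*} [CommSemiring R] [PartialOrder R]
    [IsOrderedRing R] (s : Finset X) {w : X → R} (hw : ∀ x ∈ s, 0 ≤ w x) (b : X → ℕ) :
    Nat.multinomial s b * ∏ x ∈ s, w x ^ b x ≤ (∑ x ∈ s, w x) ^ ∑ x ∈ s, b x := by
  classical
  -- `piAntidiag s` only contains functions vanishing outside `s`.
  let b' : X → ℕ := fun x => if x ∈ s then b x else 0
  have hb' : ∀ x ∈ s, b' x = b x := fun x hx => if_pos hx
  have hmem : b' ∈ piAntidiag s (∑ x ∈ s, b x) :=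
    mem_piAntidiag.2 ⟨sum_congr rfl hb', fun x => by simp +contextual [b']⟩
  have hprod : ∏ x ∈ s, w x ^ b' x = ∏ x ∈ s, w x ^ b x :=
    prod_congr rfl fun x hx => by rw [hb' x hx]
  rw [sum_pow_eq_sum_piAntidiag, ← Nat.multinomial_congr hb', ← hprod]
  exact single_le_sum (f := fun k : X → ℕ => (Nat.multinomial s k : R) * ∏ x ∈ s, w x ^ k x)
    (fun k _ => mul_nonneg (Nat.cast_nonneg _) (prod_nonneg fun x hx => pow_nonneg (hw x hx) _))
    hmem

lemma multinomial_const_mul_le_pow (s : Finset X) (a : X → ℕ) (M : ℕ) :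
    Nat.multinomial s (fun x => M * a x) ≤
      ((∑ x ∈ s, a x + 1) ^ #s * Nat.multinomial s a) ^ M := by
  -- Positive even where `a` vanishes, since `0 ^ 0 = 1`.
  have hpos : 0 < (∏ x ∈ s, a x ^ a x) ^ M :=
    pow_pos (prod_pos fun _ _ => Nat.pow_self_pos) M
  refine Nat.le_of_mul_le_mul_right ?_ hpos
  calc Nat.multinomial s (fun x => M * a x) * (∏ x ∈ s, a x ^ a x) ^ M
      = Nat.multinomial s (fun x => M * a x) * ∏ x ∈ s, a x ^ (M * a x) := by
        simp only [← prod_pow, ← pow_mul, mul_comm M]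
    _ ≤ (∑ x ∈ s, a x) ^ ∑ x ∈ s, M * a x :=
        multinomial_mul_prod_pow_le_sum_pow s (fun x _ => Nat.zero_le (a x)) _
    _ = ((∑ x ∈ s, a x) ^ ∑ x ∈ s, a x) ^ M := by
        rw [← mul_sum, mul_comm, pow_mul]
    _ ≤ ((∑ x ∈ s, a x + 1) ^ #s * (Nat.multinomial s a * ∏ x ∈ s, a x ^ a x)) ^ M := by
        gcongr
        exact sum_pow_sum_le_multinomial_mul_prod_pow s a
    _ = ((∑ x ∈ s, a x + 1) ^ #s * Nat.multinomial s a) ^ M * (∏ x ∈ s, a x ^ a x) ^ M := by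
        rw [← mul_assoc, mul_pow]

end Multinomial

section TypeClass

variable {X : Type*} [Fintype X] {P : X → ℚ}

lemma sum_eq_of_mul_eq_natCast (hsum : ∑ x, P x = 1) {k : ℕ} {a : X → ℕ}
    (ha : ∀ x, (k : ℚ) * P x = a x) : ∑ x, a x = k := by
  have hcast : ((∑ x, a x : ℕ) : ℚ) = k := by
    rw [Nat.cast_sum, ← sum_congr rfl fun x _ => ha x, ← mul_sum, hsum, mul_one]
  exact_mod_cast hcast

lemma typeClassCard_eq_multinomial (hsum : ∑ x, P x = 1) {k : ℕ} {a : X → ℕ}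
    (ha : ∀ x, (k : ℚ) * P x = a x) : typeClassCard P k = Nat.multinomial univ a := by
  simp only [typeClassCard, Nat.multinomial, ha, Rat.num_natCast, Int.toNat_natCast,
    sum_eq_of_mul_eq_natCast hsum ha]

lemma exists_natCast_eq_of_den_eq_one {q : ℚ} (hq : 0 ≤ q) (hden : q.den = 1) :
    ∃ m : ℕ, q = m := by
  obtain ⟨m, hm⟩ := Int.eq_ofNat_of_zero_le (Rat.num_nonneg.2 hq)
  exact ⟨m, by rw [← (Rat.den_eq_one_iff q).1 hden, hm, Int.cast_natCast]⟩

lemma typeClassCard_mul_le_pow (hnonneg : ∀ x, 0 ≤ P x) (hsum : ∑ x, P x = 1) {n : ℕ}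
    (hden : ∀ x, ((n : ℚ) * P x).den = 1) (M : ℕ) :
    typeClassCard P (M * n) ≤ ((n + 1) ^ Fintype.card X * typeClassCard P n) ^ M := by
  choose a ha using fun x =>
    exists_natCast_eq_of_den_eq_one (mul_nonneg n.cast_nonneg (hnonneg x)) (hden x)
  have hMa : ∀ x, ((M * n : ℕ) : ℚ) * P x = (M * a x : ℕ) := fun x => by
    rw [Nat.cast_mul, Nat.cast_mul, mul_assoc, ha]
  rw [typeClassCard_eq_multinomial hsum ha, typeClassCard_eq_multinomial hsum hMa]
  simpa only [sum_eq_of_mul_eq_natCast hsum ha, card_univ] using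
    multinomial_const_mul_le_pow univ a M

end TypeClass

lemma add_one_pow_le_exp_two_mul_log {n : ℕ} (hn : 2 ≤ n) (m : ℕ) :
    ((n : ℝ) + 1) ^ m ≤ Real.exp (2 * m * Real.log n) := by
  have hn_pos : (0 : ℝ) < n := by exact_mod_cast (by lia : 0 < n)
  have hsucc_le_sq : (n : ℝ) + 1 ≤ n ^ 2 := by exact_mod_cast (by nlinarith : n + 1 ≤ n ^ 2)
  calc ((n : ℝ) + 1) ^ m ≤ ((n : ℝ) ^ 2) ^ m := by gcongr
    _ = Real.exp (2 * m * Real.log n) := by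
        rw [← pow_mul, ← Real.exp_log (pow_pos hn_pos (2 * m)), Real.log_pow]
        push_cast
        rfl

theorem typeClassCard_pow_ge_general {X : Type*} [Fintype X] {P : X → ℚ}
    (hnonneg : ∀ x, 0 ≤ P x) (hsum : ∑ x, P x = 1) {n : ℕ} (hn : 2 ≤ n)
    (hden : ∀ x, ((n : ℚ) * P x).den = 1) (M : ℕ) :
    (typeClassCard P n : ℝ) ^ M ≥
      Real.exp (-(2 * Fintype.card X * M * Real.log n)) * typeClassCard P (M * n) := by
  have hle : (typeClassCard P (M * n) : ℝ) ≤
      (((n : ℝ) + 1) ^ Fintype.card X * typeClassCard P n) ^ M := by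
    exact_mod_cast typeClassCard_mul_le_pow hnonneg hsum hden M
  rw [ge_iff_le, Real.exp_neg, inv_mul_le_iff₀ (Real.exp_pos _)]
  calc (typeClassCard P (M * n) : ℝ)
      ≤ (((n : ℝ) + 1) ^ Fintype.card X * typeClassCard P n) ^ M := hle
    _ ≤ (Real.exp (2 * Fintype.card X * Real.log n) * typeClassCard P n) ^ M := by
        gcongr
        exact add_one_pow_le_exp_two_mul_log hn _
    _ = Real.exp (2 * Fintype.card X * M * Real.log n) * (typeClassCard P n : ℝ) ^ M := by
        rw [mul_pow, ← Real.exp_nat_mul]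
        ring_nf

/-- For a rational-valued probability distribution `P` on a finite set `X`
with `min_x P(x) > 0`, there are a constant `η = η(P) < ∞` and a threshold `n₁` such
that for all `n ≥ n₁` with `n·P(x) ∈ ℕ` for every `x` (expressed via the denominator
of `n·P(x)` being `1`) and every positive integer `M`,
`|T_n(P)|^M ≥ exp(−η·M·log n) · |T_{Mn}(P)|`. -/
theorem typeClassCard_pow_ge {X : Type*} [Fintype X] [Nonempty X]
    (P : X → ℚ)
    (hpos : ∀ x, 0 < P x) (hsum : ∑ x, P x = 1) :
    ∃ η : ℝ, ∃ n₁ : ℕ, ∀ n : ℕ, n₁ ≤ n →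
      (∀ x, ((n : ℚ) * P x).den = 1) →
      ∀ M : ℕ, 0 < M →
        ((typeClassCard P n : ℝ)) ^ M ≥
          Real.exp (-(η * M * Real.log n)) * (typeClassCard P (M * n) : ℝ) := by
  exact ⟨2 * Fintype.card X, 2, fun _ hn hden M _ =>
    typeClassCard_pow_ge_general (fun x => (hpos x).le) hsum hn hden M⟩
end
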